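/- arXiv:2003.04703 — 2 statements merged into one kernel-verified Lean document; each statement's English description precedes it below -/
import Mathlib

section
/- For n×n matrices A, B over the extended reals ℝ̄ and a vector x ∈ ℝ̄^n, the system of inequalities A ⊗ x ≤ x and B ⊗ x ≤ x holds if and only if x = (A ⊕ B)* ⊗ x. -/
/-! Write `M = A ⊕ B`; the two inequalities together say `M i j + x j ≤ x i` for all `i`, `j`.
Because `⊥` absorbs in `EReal`, translation `· + b` preserves arbitrary suprema, so a bound on
every `f k + b` passes to `(⨆ k, f k) + b` (`iSup_add_le_of_forall`). Hence the inequality for `M`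
propagates to all its powers (`mpPow_add_le`) and to `M*`, giving `M* ⊗ x ≤ x`; the reverse
inequality comes from `E ≤ M*`. Conversely `M ≤ M*` (`le_mpStar`), so `x = M* ⊗ x` bounds `M ⊗ x`
by `x`. -/

noncomputable section

/-- Max-plus matrix product over the extended reals (`-∞` is absorbing for `+` in `EReal`). -/
def mpMul {m n p : ℕ} (A : Matrix (Fin m) (Fin n) EReal) (B : Matrix (Fin n) (Fin p) EReal) :
    Matrix (Fin m) (Fin p) EReal :=
  fun i j => ⨆ k, A i k + B k j

/-- Max-plus matrix-vector product. -/
def mpMulVec {m n : ℕ} (A : Matrix (Fin m) (Fin n) EReal) (x : Fin n → EReal) :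
    Fin m → EReal :=
  fun i => ⨆ k, A i k + x k

/-- Min-plus addition on `EReal`: `+∞` is absorbing. -/
def mnAdd (a b : EReal) : EReal := -((-a) + (-b))

/-- Min-plus matrix product. -/
def mnMul {m n p : ℕ} (A : Matrix (Fin m) (Fin n) EReal) (B : Matrix (Fin n) (Fin p) EReal) :
    Matrix (Fin m) (Fin p) EReal :=
  fun i j => ⨅ k, mnAdd (A i k) (B k j)

/-- Min-plus matrix-vector product. -/
def mnMulVec {m n : ℕ} (A : Matrix (Fin m) (Fin n) EReal) (x : Fin n → EReal) :
    Fin m → EReal :=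
  fun i => ⨅ k, mnAdd (A i k) (x k)

/-- Conjugate matrix: `(conj A) i j = -(A j i)`. -/
def conjM {m n : ℕ} (A : Matrix (Fin m) (Fin n) EReal) : Matrix (Fin n) (Fin m) EReal :=
  fun i j => -(A j i)

/-- Max-plus identity matrix. -/
def mpId (n : ℕ) : Matrix (Fin n) (Fin n) EReal :=
  fun i j => if i = j then 0 else ⊥

/-- Min-plus identity matrix. -/
def mnId (n : ℕ) : Matrix (Fin n) (Fin n) EReal :=
  fun i j => if i = j then 0 else ⊤

/-- Max-plus matrix powers. -/
def mpPow {n : ℕ} (A : Matrix (Fin n) (Fin n) EReal) : ℕ → Matrix (Fin n) (Fin n) EReal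
  | 0 => mpId n
  | k + 1 => mpMul A (mpPow A k)

/-- Min-plus matrix powers. -/
def mnPow {n : ℕ} (A : Matrix (Fin n) (Fin n) EReal) : ℕ → Matrix (Fin n) (Fin n) EReal
  | 0 => mnId n
  | k + 1 => mnMul A (mnPow A k)

/-- Max-plus Kleene star: entrywise supremum of all max-plus powers. -/
def mpStar {n : ℕ} (A : Matrix (Fin n) (Fin n) EReal) : Matrix (Fin n) (Fin n) EReal :=
  fun i j => ⨆ k, mpPow A k i j

/-- Min-plus star: entrywise infimum of all min-plus powers. -/
def mnStar {n : ℕ} (A : Matrix (Fin n) (Fin n) EReal) : Matrix (Fin n) (Fin n) EReal :=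
  fun i j => ⨅ k, mnPow A k i j

/-- Entrywise maximum of two matrices (`A ⊕ B`). -/
def mSup {m n : ℕ} (A B : Matrix (Fin m) (Fin n) EReal) : Matrix (Fin m) (Fin n) EReal :=
  fun i j => A i j ⊔ B i j

/-- The excluded cases of the residuation `a ≤ c - b ↔ a + b ≤ c` are `b = c = ⊥` and
`b = c = ⊤`, where the bound is trivial. -/
lemma iSup_add_le_of_forall {ι : Sort*} (f : ι → EReal) (b c : EReal)
    (h : ∀ k, f k + b ≤ c) : (⨆ k, f k) + b ≤ c := by
  by_cases hb : b = ⊥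
  · simp [hb]
  by_cases hc : c = ⊤
  · simp [hc]
  rw [← EReal.le_sub_iff_add_le (Or.inl hb) (Or.inr hc)]
  exact iSup_le fun k => (EReal.le_sub_iff_add_le (Or.inl hb) (Or.inr hc)).2 (h k)

lemma mpPow_add_le {n : ℕ} (M : Matrix (Fin n) (Fin n) EReal) (x : Fin n → EReal)
    (h : ∀ i j, M i j + x j ≤ x i) (k : ℕ) (i j : Fin n) : mpPow M k i j + x j ≤ x i := by
  induction k generalizing i with
  | zero =>
    by_cases hij : i = j
    · simp [mpPow, mpId, hij]
    · simp [mpPow, mpId, hij]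
  | succ k ih =>
    refine iSup_add_le_of_forall _ _ _ fun l => ?_
    rw [add_assoc]
    exact (add_le_add le_rfl (ih l)).trans (h i l)

lemma mpId_le_mpStar {n : ℕ} (M : Matrix (Fin n) (Fin n) EReal) (i : Fin n) :
    0 ≤ mpStar M i i :=
  le_iSup_of_le 0 (by simp [mpPow, mpId])

lemma le_mpStar {n : ℕ} (M : Matrix (Fin n) (Fin n) EReal) (i j : Fin n) :
    M i j ≤ mpStar M i j :=
  le_iSup_of_le 1 (le_iSup_of_le j (by simp [mpPow, mpId]))

/-- `A ⊗ x ≤ x ∧ B ⊗ x ≤ x ↔ x = (A ⊕ B)* ⊗ x`. -/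
theorem two_ineq_iff_star {n : ℕ} (A B : Matrix (Fin n) (Fin n) EReal)
    (x : Fin n → EReal) :
    (mpMulVec A x ≤ x ∧ mpMulVec B x ≤ x) ↔ x = mpMulVec (mpStar (mSup A B)) x := by
  constructor
  · rintro ⟨hA, hB⟩
    have h : ∀ i j, mSup A B i j + x j ≤ x i := by
      intro i j
      have ha : A i j + x j ≤ x i := (le_iSup (fun k => A i k + x k) j).trans (hA i)
      have hb : B i j + x j ≤ x i := (le_iSup (fun k => B i k + x k) j).trans (hB i)
      rcases le_total (A i j) (B i j) with hab | hab
      · simpa [mSup, hab] using hb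
      · simpa [mSup, hab] using ha
    apply le_antisymm
    · intro i
      refine le_iSup_of_le i ?_
      simpa using add_le_add (mpId_le_mpStar (mSup A B) i) (le_refl (x i))
    · exact fun i => iSup_le fun j =>
        iSup_add_le_of_forall _ _ _ fun k => mpPow_add_le _ x h k i j
  · intro hx
    have h : ∀ i j, mSup A B i j + x j ≤ x i := fun i j =>
      (add_le_add (le_mpStar _ i j) le_rfl).trans
        ((le_iSup (fun k => mpStar (mSup A B) i k + x k) j).trans (congrFun hx i).ge)
    exact ⟨fun i => iSup_le fun j => (add_le_add le_sup_left le_rfl).trans (h i j),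
      fun i => iSup_le fun j => (add_le_add le_sup_right le_rfl).trans (h i j)⟩
end
end

section
/- (Combined (max,+)/(min,+) model of P-time event graphs.) Let A, B, C be n×n matrices over the extended reals ℝ̄, and define 𝒜 = B* ⊗ A ⊗ B* and ℬ = (B^♯)_* ⊗' C ⊗' (B^♯)_*. Let x : ℕ → ℝ̄^n be a sequence with x(0) = B* ⊗ x(0). Then the following are equivalent: (a) for all k ≥ 1, A ⊗ x(k-1) ⊕ B ⊗ x(k) ≤ x(k) and x(k) ≤ B^♯ ⊗' x(k) ⊕' C ⊗' x(k-1); (b) for all k ≥ 1, 𝒜 ⊗ x(k-1) ≤ x(k) ≤ ℬ ⊗' x(k-1), and for all k ≥ 0, x(k) = B* ⊗ x(k). -/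
/-!
In `EReal`, where `⊥` absorbs under `+`, translation `a ↦ a + b` has a right adjoint
(`add_le_iff_le_neg`). Hence `+` distributes over arbitrary suprema, and the max-plus product is
associative. Two consequences are used:

* `x = B* ⊗ x` holds iff `B ⊗ x ≤ x` (`star_fixed_iff`);
* if `B ⊗ u ≤ u` and `B ⊗ v ≤ v`, then `A ⊗ u ≤ v` iff `(B* ⊗ A ⊗ B*) ⊗ u ≤ v`
  (`sandwich_le_iff`), because `B*` then fixes both `u` and `v`.

Negation turns the min-plus product with `M` into the max-plus product with `-M`, and turns
`(B^♯)_*` into the max-plus star of `Bᵀ`. The upper inequalities for `x` are therefore max-plus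
lower inequalities for `-x`, with `-C` and `Bᵀ` in place of `A` and `B`. By the adjunction again,
`B ⊗ x ≤ x` iff `Bᵀ ⊗ (-x) ≤ -x`, so the same two facts settle both halves.
-/

noncomputable section

/-- Translation by `b` is residuated on `EReal`, with no finiteness assumption. -/
lemma add_le_iff_le_neg (a b c : EReal) : a + b ≤ c ↔ a ≤ -(-c + b) := by
  induction a <;> induction b <;> induction c <;> try simp
  norm_cast
  constructor <;> intro h <;> linarith

lemma iSup_add_eq {ι : Sort*} (f : ι → EReal) (b : EReal) :
    (⨆ i, f i) + b = ⨆ i, (f i + b) := by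
  refine eq_of_forall_ge_iff fun c => ?_
  simp only [add_le_iff_le_neg, iSup_le_iff]

lemma add_iSup_eq {ι : Sort*} (f : ι → EReal) (b : EReal) :
    b + (⨆ i, f i) = ⨆ i, (b + f i) := by
  simp only [add_comm b, iSup_add_eq]

lemma mpMulVec_le_iff {m n : ℕ} (M : Matrix (Fin m) (Fin n) EReal) (u : Fin n → EReal)
    (v : Fin m → EReal) : mpMulVec M u ≤ v ↔ ∀ i k, M i k + u k ≤ v i := by
  simp only [Pi.le_def, mpMulVec, iSup_le_iff]

lemma mpMulVec_mul {m n p : ℕ} (M : Matrix (Fin m) (Fin n) EReal)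
    (N : Matrix (Fin n) (Fin p) EReal) (u : Fin p → EReal) :
    mpMulVec (mpMul M N) u = mpMulVec M (mpMulVec N u) := by
  funext i
  simp only [mpMulVec, mpMul, iSup_add_eq, add_iSup_eq, add_assoc]
  exact iSup_comm

lemma mpMulVec_mono {m n : ℕ} (M : Matrix (Fin m) (Fin n) EReal) {u v : Fin n → EReal}
    (h : u ≤ v) : mpMulVec M u ≤ mpMulVec M v :=
  fun _ => iSup_mono fun k => add_le_add_right (h k) _

lemma mpMulVec_id {n : ℕ} (u : Fin n → EReal) : mpMulVec (mpId n) u = u := by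
  funext i
  refine le_antisymm (iSup_le fun k => ?_) (le_iSup_of_le i (by simp [mpId]))
  by_cases h : i = k
  · simp [mpId, h]
  · simp [mpId, h]

lemma mpMulVec_star {n : ℕ} (B : Matrix (Fin n) (Fin n) EReal) (u : Fin n → EReal) (i : Fin n) :
    mpMulVec (mpStar B) u i = ⨆ k, mpMulVec (mpPow B k) u i := by
  simp only [mpMulVec, mpStar, iSup_add_eq]
  exact iSup_comm

lemma pow_le_star {n : ℕ} (B : Matrix (Fin n) (Fin n) EReal) (u : Fin n → EReal) (k : ℕ) :
    mpMulVec (mpPow B k) u ≤ mpMulVec (mpStar B) u := fun i => by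
  rw [mpMulVec_star]
  exact le_iSup (fun k => mpMulVec (mpPow B k) u i) k

lemma le_star {n : ℕ} (B : Matrix (Fin n) (Fin n) EReal) (u : Fin n → EReal) :
    u ≤ mpMulVec (mpStar B) u := by
  simpa only [mpPow, mpMulVec_id] using pow_le_star B u 0

lemma star_le {n : ℕ} {B : Matrix (Fin n) (Fin n) EReal} {u : Fin n → EReal}
    (h : mpMulVec B u ≤ u) : mpMulVec (mpStar B) u ≤ u := fun i => by
  rw [mpMulVec_star]
  refine iSup_le fun k => ?_
  have hk : mpMulVec (mpPow B k) u ≤ u := by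
    induction k with
    | zero => exact (mpMulVec_id u).le
    | succ k ih =>
      rw [mpPow, mpMulVec_mul]
      exact (mpMulVec_mono B ih).trans h
  exact hk i

lemma star_fixed_iff {n : ℕ} (B : Matrix (Fin n) (Fin n) EReal) (u : Fin n → EReal) :
    u = mpMulVec (mpStar B) u ↔ mpMulVec B u ≤ u := by
  constructor
  · intro h
    have h1 := pow_le_star B u 1
    rw [← h] at h1
    simpa only [mpPow, mpMulVec_mul, mpMulVec_id] using h1
  · exact fun h => le_antisymm (le_star B u) (star_le h)

lemma sandwich_le_iff {n : ℕ} (A B : Matrix (Fin n) (Fin n) EReal) {u v : Fin n → EReal}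
    (hu : mpMulVec B u ≤ u) (hv : mpMulVec B v ≤ v) :
    mpMulVec (mpMul (mpMul (mpStar B) A) (mpStar B)) u ≤ v ↔ mpMulVec A u ≤ v := by
  rw [mpMulVec_mul, mpMulVec_mul, ← (star_fixed_iff B u).2 hu]
  exact ⟨(le_star B _).trans, fun h => (mpMulVec_mono _ h).trans (star_le hv)⟩

/-- Entrywise negation of a matrix, which exchanges the min-plus and max-plus structures. -/
def negM {m n : ℕ} (M : Matrix (Fin m) (Fin n) EReal) : Matrix (Fin m) (Fin n) EReal :=
  fun i j => -(M i j)

lemma neg_iInf_eq {ι : Sort*} (f : ι → EReal) : -(⨅ i, f i) = ⨆ i, -(f i) := by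
  refine eq_of_forall_ge_iff fun c => ?_
  simp only [EReal.neg_le, le_iInf_iff, iSup_le_iff]

lemma negM_mul {m n p : ℕ} (M : Matrix (Fin m) (Fin n) EReal) (N : Matrix (Fin n) (Fin p) EReal) :
    negM (mnMul M N) = mpMul (negM M) (negM N) := by
  funext i j
  simp only [negM, mnMul, mpMul, mnAdd, neg_iInf_eq, neg_neg]

lemma negM_pow {n : ℕ} (M : Matrix (Fin n) (Fin n) EReal) (k : ℕ) :
    negM (mnPow M k) = mpPow (negM M) k := by
  induction k with
  | zero =>
    funext i j
    by_cases h : i = j <;> simp [negM, mnPow, mpPow, mnId, mpId, h]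
  | succ k ih => rw [mnPow, mpPow, negM_mul, ih]

lemma negM_star {n : ℕ} (M : Matrix (Fin n) (Fin n) EReal) :
    negM (mnStar M) = mpStar (negM M) := by
  funext i j
  simp only [mpStar, ← negM_pow]
  simp only [negM, mnStar, neg_iInf_eq]

lemma le_mnMulVec_iff {m n : ℕ} (M : Matrix (Fin m) (Fin n) EReal) (u : Fin n → EReal)
    (v : Fin m → EReal) : v ≤ mnMulVec M u ↔ mpMulVec (negM M) (-u) ≤ -v := by
  rw [mpMulVec_le_iff]
  simp only [Pi.le_def, mnMulVec, mnAdd, le_iInf_iff, negM, Pi.neg_apply]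
  exact forall₂_congr fun _ _ => EReal.le_neg

/-- `B ⊗ u ≤ v` iff `u ≤ B^♯ ⊗' v`, the second inequality being written in negated form. -/
lemma conj_adjunction {n : ℕ} (B : Matrix (Fin n) (Fin n) EReal) (u v : Fin n → EReal) :
    mpMulVec (negM (conjM B)) (-v) ≤ -u ↔ mpMulVec B u ≤ v := by
  simp only [mpMulVec_le_iff, negM, conjM, neg_neg, Pi.neg_apply]
  rw [forall_comm]
  refine forall₂_congr fun i k => ?_
  rw [add_comm (B i k) (u k), add_le_iff_le_neg (u k), EReal.le_neg, add_comm]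

/-- combined (max,+)/(min,+) model of P-time event graphs. -/
theorem combined_model {n : ℕ} (A B C : Matrix (Fin n) (Fin n) EReal)
    (x : ℕ → Fin n → EReal)
    (hx0 : x 0 = mpMulVec (mpStar B) (x 0)) :
    (∀ k : ℕ, 1 ≤ k →
        mpMulVec A (x (k - 1)) ⊔ mpMulVec B (x k) ≤ x k ∧
        x k ≤ mnMulVec (conjM B) (x k) ⊓ mnMulVec C (x (k - 1))) ↔
      ((∀ k : ℕ, 1 ≤ k →
          mpMulVec (mpMul (mpMul (mpStar B) A) (mpStar B)) (x (k - 1)) ≤ x k ∧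
          x k ≤ mnMulVec (mnMul (mnMul (mnStar (conjM B)) C) (mnStar (conjM B))) (x (k - 1))) ∧
        ∀ k : ℕ, x k = mpMulVec (mpStar B) (x k)) := by
  have upper : ∀ {u v : Fin n → EReal}, mpMulVec B u ≤ u → mpMulVec B v ≤ v →
      (v ≤ mnMulVec (mnMul (mnMul (mnStar (conjM B)) C) (mnStar (conjM B))) u ↔
        v ≤ mnMulVec C u) := by
    intro u v hu hv
    rw [le_mnMulVec_iff, le_mnMulVec_iff, negM_mul, negM_mul, negM_star]
    exact sandwich_le_iff _ _ ((conj_adjunction B u u).2 hu) ((conj_adjunction B v v).2 hv)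
  simp only [star_fixed_iff] at hx0 ⊢
  constructor
  · intro h
    have hB : ∀ k, mpMulVec B (x k) ≤ x k := by
      intro k
      rcases Nat.eq_zero_or_pos k with rfl | hk
      · exact hx0
      · exact le_sup_right.trans (h k hk).1
    refine ⟨fun k hk => ⟨?_, ?_⟩, hB⟩
    · exact (sandwich_le_iff A B (hB _) (hB k)).2 (le_sup_left.trans (h k hk).1)
    · exact (upper (hB _) (hB k)).2 ((h k hk).2.trans inf_le_right)
  · rintro ⟨h, hB⟩ k hk
    refine ⟨sup_le ?_ (hB k), le_inf ?_ ?_⟩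
    · exact (sandwich_le_iff A B (hB _) (hB k)).1 (h k hk).1
    · exact (le_mnMulVec_iff _ _ _).2 ((conj_adjunction B _ _).2 (hB k))
    · exact (upper (hB _) (hB k)).1 (h k hk).2
end
end
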